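/- arXiv:1509.07422 — 2 statements merged into one kernel-verified Lean document; each statement's English description precedes it below -/
import Mathlib

section
/- Let H be a real Hilbert space, Z a measurable space, and p, q two probability measures on Z. Let ℓ : H × Z → ℝ be a loss function differentiable in its first argument, and let f(x) = ∫ ℓ(x, z) dp(z) and g(x) = ∫ ℓ(x, z) dq(z), where the gradients satisfy ∇f(x) = ∫ ∇ₓℓ(x, z) dp(z) and ∇g(x) = ∫ ∇ₓℓ(x, z) dq(z) for all x (with all integrands Bochner integrable). Suppose f and g are m-strongly convex for some m > 0 with minimizers x_f and x_g, and let 𝓕 be a set of functions from Z to H such that for every x ∈ H the map z ↦ ∇ₓℓ(x, z) belongs to 𝓕 and is integrable with respect to both p and q. Then ‖x_f − x_g‖ ≤ (1/m) · sup_{h ∈ 𝓕} ‖∫ h(z) dp(z) − ∫ h(z) dq(z)‖. -/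
open MeasureTheory
open scoped RealInnerProductSpace ENNReal

/-- `u` is an `m`-strong subgradient of `f` at `x`: the quadratic with slope `u` and curvature `m`
touching `f` at `x` minorizes `f`. A differentiable `f` is `m`-strongly convex when `∇ f x` is an
`m`-strong subgradient of `f` at every `x`. -/
def IsStrongSubgradientAt {E : Type*} [NormedAddCommGroup E] [InnerProductSpace ℝ E]
    (m : ℝ) (f : E → ℝ) (u x : E) : Prop :=
  ∀ y : E, f x + ⟪u, y - x⟫ + m / 2 * ‖y - x‖ ^ 2 ≤ f y

namespace IsStrongSubgradientAt

variable {E : Type*} [NormedAddCommGroup E] [InnerProductSpace ℝ E]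
  {m : ℝ} {f : E → ℝ} {u v x y : E}

theorem mul_norm_sub_sq_le_inner (hu : IsStrongSubgradientAt m f u x)
    (hv : IsStrongSubgradientAt m f v y) : m * ‖x - y‖ ^ 2 ≤ ⟪u - v, x - y⟫ := by
  have minorant_x := hu y
  have minorant_y := hv x
  rw [← neg_sub x y, inner_neg_right, norm_neg] at minorant_x
  rw [inner_sub_left]
  linarith

theorem mul_norm_sub_le_norm_sub (hu : IsStrongSubgradientAt m f u x)
    (hv : IsStrongSubgradientAt m f v y) : m * ‖x - y‖ ≤ ‖u - v‖ := by
  rcases (norm_nonneg (x - y)).eq_or_lt with norm_zero | norm_pos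
  · simp [← norm_zero]
  · refine le_of_mul_le_mul_right ?_ norm_pos
    calc m * ‖x - y‖ * ‖x - y‖ = m * ‖x - y‖ ^ 2 := by ring
      _ ≤ ⟪u - v, x - y⟫ := hu.mul_norm_sub_sq_le_inner hv
      _ ≤ ‖u - v‖ * ‖x - y‖ := real_inner_le_norm _ _

end IsStrongSubgradientAt

theorem gradient_eq_zero_of_isLocalMin {H : Type*} [NormedAddCommGroup H] [InnerProductSpace ℝ H]
    [CompleteSpace H] {f : H → ℝ} {x : H} (hx : IsLocalMin f x) : gradient f x = 0 := by
  rw [gradient, hx.fderiv_eq_zero, map_zero]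

section VectorIPM

variable {Z H : Type*} [MeasurableSpace Z] [NormedAddCommGroup H] [NormedSpace ℝ H]
  {𝓕 : Set (Z → H)} {p q : Measure Z}

/-- The vector integral probability metric `γ_𝓕(p, q)`, with values in `[0, ∞]`. The supremum runs
over the members of `𝓕` integrable for both measures, because the Bochner integral of any other
function is the junk value `0`. -/
noncomputable def vectorIPM (𝓕 : Set (Z → H)) (p q : Measure Z) : ℝ≥0∞ :=
  ⨆ (h ∈ 𝓕) (_ : Integrable h p) (_ : Integrable h q), ‖(∫ z, h z ∂p) - ∫ z, h z ∂q‖ₑ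

theorem enorm_integral_sub_le_vectorIPM {h : Z → H} (hh : h ∈ 𝓕) (hp : Integrable h p)
    (hq : Integrable h q) : ‖(∫ z, h z ∂p) - ∫ z, h z ∂q‖ₑ ≤ vectorIPM 𝓕 p q :=
  le_iSup₂_of_le h hh <| le_iSup₂_of_le hp hq le_rfl

theorem vectorIPM_le_iSup_enorm_integral_sub :
    vectorIPM 𝓕 p q ≤ ⨆ h ∈ 𝓕, ‖(∫ z, h z ∂p) - ∫ z, h z ∂q‖ₑ :=
  iSup₂_mono fun _ _ => iSup₂_le fun _ _ => le_rfl

end VectorIPM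

theorem vector_ipm_bounds_minimizer_change_general
    {H : Type*} [NormedAddCommGroup H] [InnerProductSpace ℝ H] [CompleteSpace H]
    {Z : Type*} [MeasurableSpace Z] {p q : Measure Z} {f g : H → ℝ} {φ : Z → H} {m : ℝ}
    (hm : 0 < m) {xf xg : H}
    (hgradf : HasGradientAt f (∫ z, φ z ∂p) xf) (hxf : IsLocalMin f xf)
    (hsubg : IsStrongSubgradientAt m g (∫ z, φ z ∂q) xf) (hxg : IsStrongSubgradientAt m g 0 xg)
    {𝓕 : Set (Z → H)} (hφ : φ ∈ 𝓕) (hφp : Integrable φ p) (hφq : Integrable φ q) :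
    ‖xf - xg‖ₑ ≤ ENNReal.ofReal (1 / m) * vectorIPM 𝓕 p q := by
  have mean_p_eq_zero : ∫ z, φ z ∂p = 0 :=
    hgradf.gradient.symm.trans (gradient_eq_zero_of_isLocalMin hxf)
  have norm_le : ‖xf - xg‖ ≤ 1 / m * ‖(∫ z, φ z ∂p) - ∫ z, φ z ∂q‖ := by
    rw [one_div, le_inv_mul_iff₀ hm, norm_sub_rev (∫ z, φ z ∂p), mean_p_eq_zero]
    exact hsubg.mul_norm_sub_le_norm_sub hxg
  calc ‖xf - xg‖ₑ = ENNReal.ofReal ‖xf - xg‖ := (ofReal_norm _).symm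
    _ ≤ ENNReal.ofReal (1 / m * ‖(∫ z, φ z ∂p) - ∫ z, φ z ∂q‖) := ENNReal.ofReal_le_ofReal norm_le
    _ = ENNReal.ofReal (1 / m) * ‖(∫ z, φ z ∂p) - ∫ z, φ z ∂q‖ₑ := by
      rw [ENNReal.ofReal_mul (one_div_pos.mpr hm).le, ofReal_norm]
    _ ≤ ENNReal.ofReal (1 / m) * vectorIPM 𝓕 p q := by
      gcongr
      exact enorm_integral_sub_le_vectorIPM hφ hφp hφq

/-- **Lemma 1 of the paper.** The vector integral probability metric
`γ_𝓕(p, q) = sup_{h ∈ 𝓕} ‖E_{z∼p}[h(z)] − E_{z∼q}[h(z)]‖` bounds the distance between the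
minimizers of the expected losses `f(x) = E_{z∼p}[ℓ(x,z)]` and `g(x) = E_{z∼q}[ℓ(x,z)]`,
provided every gradient map `z ↦ ∇ₓℓ(x, z)` belongs to the class `𝓕`:
`‖x_f − x_g‖ ≤ (1/m) · γ_𝓕(p, q)`. -/
theorem vector_ipm_bounds_minimizer_change
    {H : Type*} [NormedAddCommGroup H] [InnerProductSpace ℝ H] [CompleteSpace H]
    {Z : Type*} [MeasurableSpace Z]
    (p q : Measure Z) [IsProbabilityMeasure p] [IsProbabilityMeasure q]
    (ℓ : H → Z → ℝ) (gradℓ : H → Z → H)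
    (hdiff : ∀ z : Z, ∀ x : H, HasGradientAt (fun x' => ℓ x' z) (gradℓ x z) x)
    (f g : H → ℝ)
    (hf : ∀ x : H, f x = ∫ z, ℓ x z ∂p) (hg : ∀ x : H, g x = ∫ z, ℓ x z ∂q)
    (hfdiff : Differentiable ℝ f) (hgdiff : Differentiable ℝ g)
    (hgradf : ∀ x : H, gradient f x = ∫ z, gradℓ x z ∂p)
    (hgradg : ∀ x : H, gradient g x = ∫ z, gradℓ x z ∂q)
    (m : ℝ) (hm : 0 < m)
    (hconvf : ∀ x y : H, f x + ⟪gradient f x, y - x⟫ + m / 2 * ‖y - x‖ ^ 2 ≤ f y)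
    (hconvg : ∀ x y : H, g x + ⟪gradient g x, y - x⟫ + m / 2 * ‖y - x‖ ^ 2 ≤ g y)
    (xf xg : H) (hxf : ∀ y : H, f xf ≤ f y) (hxg : ∀ y : H, g xg ≤ g y)
    (𝓕 : Set (Z → H))
    (hmem : ∀ x : H, (fun z => gradℓ x z) ∈ 𝓕)
    (hintp : ∀ x : H, Integrable (fun z => gradℓ x z) p)
    (hintq : ∀ x : H, Integrable (fun z => gradℓ x z) q) :
    ENNReal.ofReal ‖xf - xg‖ ≤
      ENNReal.ofReal (1 / m) *
        ⨆ h ∈ 𝓕, ENNReal.ofReal ‖(∫ z, h z ∂p) - ∫ z, h z ∂q‖ := by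
  have hsubg : IsStrongSubgradientAt m g (∫ z, gradℓ xf z ∂q) xf := hgradg xf ▸ hconvg xf
  have hsubg_zero : IsStrongSubgradientAt m g 0 xg :=
    gradient_eq_zero_of_isLocalMin (.of_forall hxg) ▸ hconvg xg
  simp only [ofReal_norm]
  exact (vector_ipm_bounds_minimizer_change_general hm (hgradf xf ▸ (hfdiff xf).hasGradientAt)
    (.of_forall hxf) hsubg hsubg_zero (hmem xf) (hintp xf) (hintq xf)).trans
      (mul_le_mul_right vectorIPM_le_iSup_enorm_integral_sub _)
end

section
/- Fix constants m > 0, ρ > 0, α > 0, and β ≥ 0, define φ : [0, ∞) → ℝ by φ(v) = α(√(2v/m) + ρ)² + β, and suppose there exists ε > 0 with φ(ε) ≤ ε. Let v̄ be the unique positive fixed point of φ. Then for every v > 0, the iterates φ^{(n)}(v) (the n-fold composition of φ applied to v) converge to v̄ as n → ∞. -/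
open Filter

/-!
The map `φ` is increasing and concave on `[0, ∞)`, and `φ 0 > 0`. By concavity the chord from `v̄`
to any `w ≥ 0` is at most as steep as the chord from `v̄` to `0`, whose slope `(v̄ - φ 0) / v̄` is
less than `1`. Hence each application of `φ` contracts the distance to `v̄` by this factor.

The derivative `φ' v̄` cannot serve as the factor: by strict concavity the chords from `v̄` to
points `w < v̄` are steeper than the tangent at `v̄`.
-/

section Iterate

variable {X : Type*} [PseudoMetricSpace X] {f : X → X} {s : Set X} {x y : X} {q : ℝ}

theorem dist_iterate_le_pow_mul_of_mapsTo (hs : Set.MapsTo f s s) (hq : 0 ≤ q)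
    (hf : ∀ z ∈ s, dist (f z) x ≤ q * dist z x) (hy : y ∈ s) (n : ℕ) :
    dist (f^[n] y) x ≤ q ^ n * dist y x := by
  refine le_geom (u := fun k => dist (f^[k] y) x) hq n fun k _ => ?_
  simpa only [Function.iterate_succ_apply'] using hf _ (hs.iterate k hy)

theorem tendsto_iterate_of_dist_le_mul_dist (hs : Set.MapsTo f s s) (hq : 0 ≤ q) (hq' : q < 1)
    (hf : ∀ z ∈ s, dist (f z) x ≤ q * dist z x) (hy : y ∈ s) :
    Tendsto (fun n : ℕ => f^[n] y) atTop (nhds x) := by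
  have hpow : Tendsto (fun n : ℕ => q ^ n * dist y x) atTop (nhds 0) := by
    simpa only [zero_mul] using
      (tendsto_pow_atTop_nhds_zero_of_lt_one hq hq').mul_const (dist y x)
  exact tendsto_iff_dist_tendsto_zero.mpr <|
    squeeze_zero (fun _ => dist_nonneg) (dist_iterate_le_pow_mul_of_mapsTo hs hq hf hy) hpow

end Iterate

section Concave

variable {f : ℝ → ℝ} {a x y : ℝ}

theorem dist_le_slope_mul_dist_of_concaveOn_of_monotoneOn {s : Set ℝ} (hconc : ConcaveOn ℝ s f)
    (hmono : MonotoneOn f s) (ha : a ∈ s) (hx : x ∈ s) (hy : y ∈ s) (hax : a < x) (hay : a ≤ y) :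
    dist (f y) (f x) ≤ slope f a x * dist y x := by
  rcases eq_or_ne y x with rfl | hyx
  · simp
  have hslope_nonneg : 0 ≤ slope f x y := hmono.slope_nonneg hx hy
  have hslope_le : slope f x y ≤ slope f a x :=
    slope_comm f x a ▸ hconc.slope_anti hx ⟨ha, hax.ne⟩ ⟨hy, hyx⟩ hay
  calc dist (f y) (f x) = |(y - x) * slope f x y| := by
        rw [Real.dist_eq, ← smul_eq_mul, sub_smul_slope, vsub_eq_sub]
    _ = slope f x y * dist y x := by
        rw [abs_mul, abs_of_nonneg hslope_nonneg, Real.dist_eq, mul_comm]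
    _ ≤ slope f a x * dist y x := by gcongr

theorem tendsto_iterate_of_concaveOn_of_monotoneOn (hconc : ConcaveOn ℝ (Set.Ici a) f)
    (hmono : MonotoneOn f (Set.Ici a)) (ha : a < f a) (hx : a ≤ x)
    (hfix : Function.IsFixedPt f x) (hy : a ≤ y) :
    Tendsto (fun n : ℕ => f^[n] y) atTop (nhds x) := by
  have ha_mem : a ∈ Set.Ici a := Set.self_mem_Ici
  have hmaps : Set.MapsTo f (Set.Ici a) (Set.Ici a) := fun z hz =>
    ha.le.trans (hmono ha_mem hz hz)
  have hax : a < x := by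
    simpa only [hfix.eq] using ha.trans_le (hmono ha_mem hx hx)
  have hslope_lt_one : slope f a x < 1 := by
    rw [slope_def_field, hfix.eq, div_lt_one (sub_pos.mpr hax)]
    gcongr
  refine tendsto_iterate_of_dist_le_mul_dist hmaps (hmono.slope_nonneg ha_mem hx) hslope_lt_one
    (fun z hz => ?_) hy
  simpa only [hfix.eq] using
    dist_le_slope_mul_dist_of_concaveOn_of_monotoneOn hconc hmono ha_mem hx hz hax hz

end Concave

/-- The one-step bound `φ(v) = α(√(2v/m) + ρ)² + β` on the mean gap, as a function on all of `ℝ`;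
only its values on `[0, ∞)` are meaningful, `Real.sqrt` being `0` at negative arguments. -/
noncomputable def meanGapMap (m ρ α β v : ℝ) : ℝ :=
  α * (Real.sqrt (2 * v / m) + ρ) ^ 2 + β

section MeanGapMap

variable {m ρ α : ℝ}

theorem meanGapMap_zero (m ρ α β : ℝ) : meanGapMap m ρ α β 0 = α * ρ ^ 2 + β := by
  simp [meanGapMap]

theorem monotone_meanGapMap (hm : 0 < m) (hρ : 0 ≤ ρ) (hα : 0 ≤ α) (β : ℝ) :
    Monotone (meanGapMap m ρ α β) := fun v w hvw => by
  unfold meanGapMap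
  gcongr

theorem meanGapMap_eq_linear_add_sqrt (hm : 0 < m) (ρ α β : ℝ) {v : ℝ} (hv : 0 ≤ v) :
    meanGapMap m ρ α β v =
      2 * α / m * v + 2 * α * ρ * Real.sqrt (2 / m) * Real.sqrt v + (α * ρ ^ 2 + β) := by
  have hsqrt : Real.sqrt (2 * v / m) = Real.sqrt (2 / m) * Real.sqrt v := by
    rw [← Real.sqrt_mul (by positivity), div_mul_eq_mul_div]
  have hsq : Real.sqrt (2 * v / m) ^ 2 = 2 * v / m := Real.sq_sqrt (by positivity)
  rw [meanGapMap, add_sq, hsq, hsqrt]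
  ring

theorem concaveOn_meanGapMap (hm : 0 < m) (hρ : 0 ≤ ρ) (hα : 0 ≤ α) (β : ℝ) :
    ConcaveOn ℝ (Set.Ici 0) (meanGapMap m ρ α β) := by
  have hlinear : ConcaveOn ℝ (Set.Ici 0) fun v : ℝ => 2 * α / m * v :=
    (concaveOn_id (convex_Ici 0)).smul (by positivity)
  have hsqrt : ConcaveOn ℝ (Set.Ici 0) fun v : ℝ =>
      2 * α * ρ * Real.sqrt (2 / m) * Real.sqrt v :=
    Real.strictConcaveOn_sqrt.concaveOn.smul (by positivity)
  exact ((hlinear.add hsqrt).add_const _).congr fun v hv =>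
    (meanGapMap_eq_linear_add_sqrt hm ρ α β hv).symm

end MeanGapMap

/-- **fixed-point iteration, Lemma 8.** For `φ(v) = α(√(2v/m) + ρ)² + β` with
`φ(ε) ≤ ε` for some `ε > 0`, the iterates `φ^[n] v` converge to the unique positive fixed
point `v̄` from every starting point `v > 0`. -/
theorem mean_gap_map_iterates_tendsto_fixed_point
    (m ρ α β ε : ℝ) (hm : 0 < m) (hρ : 0 < ρ) (hα : 0 < α) (hβ : 0 ≤ β) (hε : 0 < ε)
    (φ : ℝ → ℝ)
    (hφ : ∀ v : ℝ, φ v = α * (Real.sqrt (2 * v / m) + ρ) ^ 2 + β)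
    (hfix : φ ε ≤ ε)
    (vbar : ℝ) (hvbar_pos : 0 < vbar) (hvbar_fix : φ vbar = vbar) :
    ∀ v : ℝ, 0 < v → Tendsto (fun n : ℕ => φ^[n] v) atTop (nhds vbar) := by
  intro v hv
  obtain rfl : φ = meanGapMap m ρ α β := funext hφ
  have hzero_pos : 0 < meanGapMap m ρ α β 0 := by
    rw [meanGapMap_zero]
    positivity
  exact tendsto_iterate_of_concaveOn_of_monotoneOn (concaveOn_meanGapMap hm hρ.le hα.le β)
    ((monotone_meanGapMap hm hρ.le hα.le β).monotoneOn _) hzero_pos hvbar_pos.le hvbar_fix hv.le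
end
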